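/- Discrete equi-integrability of gradients in the critical case (Step 2 of the proof of Lemma 3.6 of the paper): assume Assumption H with β = 1/(p−1). There exists a set Ω₀ ∈ ℱ with ℙ(Ω₀) = 1 such that for every ω ∈ Ω₀, every half-open axis-parallel box A ⊂ ℝ^d and every family (u_ε)_{ε>0} of functions u_ε : εℤ^d → ℝⁿ with limsup_{ε↓0} E_ε(ω;u_ε,A) < ∞, one has lim_{k→∞} limsup_{ε↓0} ε^d Σ_{z∈εℤ^d∩A} Σ_{b∈𝒩₀, |∂_b^ε u_ε(z)| ≥ k} |∂_b^ε u_ε(z)| = 0. -/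

import Mathlib

open MeasureTheory Filter Metric Set
open scoped Classical
open scoped ENNReal Topology Pointwise

noncomputable section

namespace StochHom

/-- `ℝ^d` with the Euclidean norm. -/
abbrev Rd (d : ℕ) : Type := EuclideanSpace ℝ (Fin d)

/-- `ℝ^n` with the Euclidean norm. -/
abbrev Rn (n : ℕ) : Type := EuclideanSpace ℝ (Fin n)

/-- The lattice `ℤ^d`. -/
abbrev Zd (d : ℕ) : Type := Fin d → ℤ

variable {d n : ℕ}

/-- The embedding of the lattice `ℤ^d` into `ℝ^d`. -/
def toRd (z : Zd d) : Rd d := (EuclideanSpace.equiv (Fin d) ℝ).symm fun i => (z i : ℝ)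

/-- The standard basis vectors `eᵢ` of `ℤ^d`. -/
def stdb (i : Fin d) : Zd d := fun j => if j = i then 1 else 0

/-- The interaction range `R = max {4√d, max_{b ∈ ℰ₀} |b|}`. -/
def irange (d : ℕ) (E0 : Finset (Zd d)) : ℝ :=
  max (4 * Real.sqrt d) (sSup ((fun b : Zd d => ‖toRd b‖) '' (E0 : Set (Zd d))))

variable {Ω : Type*} [MeasurableSpace Ω]

/-- The energy `E₁(ω; u, ℤ^d ∩ A)`. -/
def energy1 (τ : Zd d → Ω → Ω) (E0 : Finset (Zd d)) (V : Zd d → Ω → Rn n → ℝ)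
    (ω : Ω) (u : Zd d → Rn n) (A : Set (Rd d)) : ℝ :=
  ∑' z : Zd d, if toRd z ∈ A then
      ∑ b ∈ E0, V b (τ z ω) ((‖toRd b‖)⁻¹ • (u (z + b) - u z)) else 0

/-- The scaled energy `E_ε(ω; u, A)`, where a function `u : εℤ^d → ℝ^n` is identified with a
function on `ℤ^d` via `z ↦ u(εz)`, so that `∂_b^ε u (z) = (u (z+b) - u z)/(ε |b|)`. -/
def energyE (τ : Zd d → Ω → Ω) (E0 : Finset (Zd d)) (V : Zd d → Ω → Rn n → ℝ)
    (ε : ℝ) (ω : Ω) (u : Zd d → Rn n) (A : Set (Rd d)) : ℝ :=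
  ε ^ d * ∑' z : Zd d, if ε • toRd z ∈ A then
      ∑ b ∈ E0, V b (τ z ω) ((ε * ‖toRd b‖)⁻¹ • (u (z + b) - u z)) else 0

/-- The localized minimal energy `m_F(ω; A)`. -/
def mF (τ : Zd d → Ω → Ω) (E0 : Finset (Zd d)) (V : Zd d → Ω → Rn n → ℝ)
    (ω : Ω) (F : Rd d →L[ℝ] Rn n) (A : Set (Rd d)) : ℝ :=
  ⨅ φ : {φ : Zd d → Rn n // ∀ z : Zd d, infDist (toRd z) Aᶜ ≤ irange d E0 → φ z = 0},
    energy1 τ E0 V ω (fun z => F (toRd z) + φ.1 z) A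

/-- The half-open cube `[0,k)^d ⊂ ℝ^d`. -/
def cube (d k : ℕ) : Set (Rd d) := {x | ∀ i, 0 ≤ x i ∧ x i < (k : ℝ)}

/-- The homogenized energy density `W₀(F) = inf_{k ≥ 1} k⁻ᵈ E[m_F(·, [0,k)^d)]`. -/
def W0 (P : Measure Ω) (τ : Zd d → Ω → Ω) (E0 : Finset (Zd d))
    (V : Zd d → Ω → Rn n → ℝ) (F : Rd d →L[ℝ] Rn n) : ℝ :=
  ⨅ k : {k : ℕ // 0 < k}, (((k : ℕ) : ℝ) ^ d)⁻¹ * ∫ ω, mF τ E0 V ω F (cube d k) ∂P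

/-- Half-open axis-parallel box `Π_i [aᵢ, bᵢ)`. -/
def halfBox (a b : Fin d → ℝ) : Set (Rd d) := {x | ∀ i, a i ≤ x i ∧ x i < b i}

/-- Open axis-parallel box `Π_i (aᵢ, bᵢ)`. -/
def openBox (a b : Fin d → ℝ) : Set (Rd d) := {x | ∀ i, a i < x i ∧ x i < b i}

/-- Closed axis-parallel box `Π_i [aᵢ, bᵢ]`. -/
def closedBox (a b : Fin d → ℝ) : Set (Rd d) := {x | ∀ i, a i ≤ x i ∧ x i ≤ b i}

/-- Half-open axis-parallel box with integer corners. -/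
def intBox (a b : Zd d) : Set (Rd d) := {x | ∀ i, (a i : ℝ) ≤ x i ∧ x i < (b i : ℝ)}

/-- The periodic cell minimization `W^{(k)}(ω; F)`. -/
def Wper (τ : Zd d → Ω → Ω) (E0 : Finset (Zd d)) (V : Zd d → Ω → Rn n → ℝ)
    (k : ℕ) (ω : Ω) (F : Rd d →L[ℝ] Rn n) : ℝ :=
  ⨅ φ : {φ : Zd d → Rn n // ∀ z z' : Zd d, φ (z + k • z') = φ z},
    ((k : ℝ) ^ d)⁻¹ * energy1 τ E0 V ω (fun z => F (toRd z) + φ.1 z) (cube d k)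

/-- Discrete sup-norm ball. -/
def zball (x : Zd d) (N : ℕ) : Finset (Zd d) :=
  Finset.Icc (fun i => x i - (N : ℤ)) (fun i => x i + (N : ℤ))

lemma mem_zball {x y : Zd d} {N : ℕ} : y ∈ zball x N ↔ ∀ i, x i - N ≤ y i ∧ y i ≤ x i + N := by
  simp only [zball, Finset.mem_Icc, Pi.le_def, forall_and]

lemma card_zball (x : Zd d) (N : ℕ) : (zball x N).card = (2 * N + 1) ^ d := by
  unfold zball
  rw [Pi.card_Icc]
  simp only [Int.card_Icc]
  rw [Finset.prod_congr rfl (fun i _ => show _ = 2 * N + 1 by omega)]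
  simp

lemma mem_closedBall_iff_zball {x y : Zd d} {N : ℕ} : y ∈ closedBall x (N : ℝ) ↔ y ∈ zball x N := by
  rw [mem_closedBall, dist_pi_le_iff (by positivity), mem_zball]
  refine forall_congr' fun i => ?_
  rw [Int.dist_eq, abs_le]
  constructor
  · rintro ⟨h1, h2⟩
    have h1' : -(N : ℤ) ≤ y i - x i := by exact_mod_cast h1
    have h2' : y i - x i ≤ (N : ℤ) := by exact_mod_cast h2
    omega
  · rintro ⟨h1, h2⟩
    have h1' : -(N : ℤ) ≤ y i - x i := by omega
    have h2' : y i - x i ≤ (N : ℤ) := by omega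
    exact ⟨by exact_mod_cast h1', by exact_mod_cast h2'⟩

lemma vitali_count (S : Finset (Zd d)) (L N0 : ℕ) (hS : S ⊆ zball 0 L) (r : Zd d → ℕ)
    (hr : ∀ x ∈ S, r x ≤ N0) (F : Zd d → ℝ≥0∞) (t : ℝ≥0∞)
    (h : ∀ x ∈ S, t * (2 * r x + 1 : ℕ) ^ d ≤ ∑ y ∈ zball x (r x), F y) :
    t * (S.card : ℝ≥0∞) ≤ 5 ^ d * ∑ y ∈ zball 0 (L + N0), F y := by
  obtain ⟨u, huS, hdisj, hcov⟩ := Vitali.exists_disjoint_subfamily_covering_enlargement_closedBall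
    (S : Set (Zd d)) (fun x => x) (fun x => (r x : ℝ)) N0
    (fun x hx => by exact_mod_cast hr x hx) 5 (by norm_num)
  set uf : Finset (Zd d) := S.filter (· ∈ u) with huf
  have hmem : ∀ x, x ∈ uf ↔ x ∈ u := fun x => by
    simp only [huf, Finset.mem_filter]
    exact ⟨fun h => h.2, fun h => ⟨huS h, h⟩⟩
  have hsub : S ⊆ uf.biUnion (fun x => zball x (5 * r x)) := by
    intro a ha
    obtain ⟨b, hb, hab⟩ := hcov a ha
    rw [Finset.mem_biUnion]
    refine ⟨b, (hmem b).2 hb, ?_⟩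
    rw [← mem_closedBall_iff_zball]
    have := hab (mem_closedBall_self (by positivity))
    push_cast
    exact this
  have hcard : S.card ≤ ∑ x ∈ uf, 5 ^ d * (2 * r x + 1) ^ d := by
    refine (Finset.card_le_card hsub).trans (Finset.card_biUnion_le.trans ?_)
    refine Finset.sum_le_sum fun x _ => ?_
    rw [card_zball, ← mul_pow]
    exact Nat.pow_le_pow_left (by omega) d
  have hdis : (uf : Set (Zd d)).PairwiseDisjoint (fun x => zball x (r x)) := by
    intro x hx y hy hxy
    have := hdisj ((hmem x).1 hx) ((hmem y).1 hy) hxy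
    simp only [Function.onFun] at this ⊢
    rw [Finset.disjoint_left]
    intro z hz hz'
    exact (Set.disjoint_left.1 this) (mem_closedBall_iff_zball.2 hz) (mem_closedBall_iff_zball.2 hz')
  calc t * (S.card : ℝ≥0∞) ≤ t * ((∑ x ∈ uf, 5 ^ d * (2 * r x + 1) ^ d : ℕ) : ℝ≥0∞) := by
        gcongr
    _ = 5 ^ d * ∑ x ∈ uf, t * (2 * r x + 1 : ℕ) ^ d := by
        push_cast
        rw [Finset.mul_sum, Finset.mul_sum]
        refine Finset.sum_congr rfl fun x _ => ?_
        ring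
    _ ≤ 5 ^ d * ∑ x ∈ uf, ∑ y ∈ zball x (r x), F y := by
        gcongr with x hx
        exact h x (huS ((hmem x).1 hx))
    _ = 5 ^ d * ∑ y ∈ uf.biUnion (fun x => zball x (r x)), F y := by
        rw [Finset.sum_biUnion hdis]
    _ ≤ 5 ^ d * ∑ y ∈ zball 0 (L + N0), F y := by
        gcongr
        intro y hy
        rw [Finset.mem_biUnion] at hy
        obtain ⟨x, hx, hy⟩ := hy
        have hxS := huS ((hmem x).1 hx)
        have h1 := mem_zball.1 (hS hxS)
        have h2 := mem_zball.1 hy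
        have h3 := hr x hxS
        rw [mem_zball]
        intro i
        have := h1 i
        have := h2 i
        simp only [Pi.zero_apply] at *
        push_cast
        omega

lemma sum_translate {Ω : Type*} (τ : Zd d → Ω → Ω) (hτadd : ∀ x y : Zd d, τ (x + y) = τ x ∘ τ y)
    (f : Ω → ℝ≥0∞) (x : Zd d) (N : ℕ) (ω : Ω) :
    ∑ y ∈ zball 0 N, f (τ y (τ x ω)) = ∑ y ∈ zball x N, f (τ y ω) := by
  refine Finset.sum_nbij' (fun y => y + x) (fun y => y - x) ?_ ?_ ?_ ?_ ?_
  · intro y hy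
    rw [mem_zball] at *
    intro i
    have := hy i
    simp only [Pi.zero_apply, Pi.add_apply] at *
    omega
  · intro y hy
    rw [mem_zball] at *
    intro i
    have := hy i
    simp only [Pi.zero_apply, Pi.sub_apply] at *
    omega
  · intro y _; simp
  · intro y _; simp
  · intro y _; rw [hτadd]; rfl

/-- Exceptional set of the truncated maximal function. -/
def excSet (τ : Zd d → Ω → Ω) (f : Ω → ℝ≥0∞) (t : ℝ≥0∞) (N0 : ℕ) : Set Ω :=
  {ω | ∃ N ≤ N0, t * (2 * N + 1 : ℕ) ^ d < ∑ y ∈ zball 0 N, f (τ y ω)}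

lemma measurableSet_excSet (τ : Zd d → Ω → Ω) (hτ : ∀ z, Measurable (τ z)) (f : Ω → ℝ≥0∞)
    (hf : Measurable f) (t : ℝ≥0∞) (N0 : ℕ) : MeasurableSet (excSet τ f t N0) := by
  have : excSet τ f t N0 = ⋃ N : ℕ, ⋃ _ : N ≤ N0,
      {ω | t * (2 * N + 1 : ℕ) ^ d < ∑ y ∈ zball 0 N, f (τ y ω)} := by
    ext ω; simp [excSet]
  rw [this]
  refine MeasurableSet.iUnion fun N => MeasurableSet.iUnion fun _ => ?_
  exact measurableSet_lt measurable_const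
    (Finset.measurable_sum _ fun y _ => hf.comp (hτ y))

lemma maximal_trunc (P : Measure Ω) (τ : Zd d → Ω → Ω)
    (hτadd : ∀ x y : Zd d, τ (x + y) = τ x ∘ τ y)
    (hτmp : ∀ z : Zd d, MeasurePreserving (τ z) P P)
    (f : Ω → ℝ≥0∞) (hf : Measurable f) (t : ℝ≥0∞) (N0 : ℕ) :
    t * P (excSet τ f t N0) ≤ 10 ^ d * ∫⁻ ω, f ω ∂P := by
  set E := excSet τ f t N0 with hE
  have hEm : MeasurableSet E := measurableSet_excSet τ (fun z => (hτmp z).measurable) f hf t N0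
  have key : ∀ ω, t * ∑ x ∈ zball (0 : Zd d) N0, E.indicator (fun _ => (1 : ℝ≥0∞)) (τ x ω) ≤
      5 ^ d * ∑ y ∈ zball (0 : Zd d) (N0 + N0), f (τ y ω) := by
    intro ω
    have hch : ∀ x : Zd d, ∃ N : ℕ, τ x ω ∈ E →
        N ≤ N0 ∧ t * (2 * N + 1 : ℕ) ^ d < ∑ y ∈ zball 0 N, f (τ y (τ x ω)) := by
      intro x
      by_cases hx : τ x ω ∈ E
      · obtain ⟨N, h1, h2⟩ := hx
        exact ⟨N, fun _ => ⟨h1, h2⟩⟩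
      · exact ⟨0, fun h => absurd h hx⟩
    choose r hr using hch
    have := vitali_count ((zball (0 : Zd d) N0).filter (fun x => τ x ω ∈ E)) N0 N0
      (Finset.filter_subset _ _) r (fun x hx => (hr x (Finset.mem_filter.1 hx).2).1)
      (fun y => f (τ y ω)) t (fun x hx => by
        have := (hr x (Finset.mem_filter.1 hx).2).2
        rw [sum_translate τ hτadd] at this
        exact this.le)
    refine le_trans (le_of_eq ?_) this
    congr 1
    rw [Finset.card_filter]
    push_cast
    refine Finset.sum_congr rfl fun x _ => ?_
    simp [Set.indicator_apply]
  have hint := lintegral_mono (μ := P) key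
  have hfm : ∀ y, Measurable fun ω => f (τ y ω) := fun y => hf.comp (hτmp y).measurable
  have him : Measurable (E.indicator (fun _ => (1 : ℝ≥0∞))) := measurable_one.indicator hEm
  have him' : ∀ y, Measurable fun ω => E.indicator (fun _ => (1 : ℝ≥0∞)) (τ y ω) :=
    fun y => him.comp (hτmp y).measurable
  rw [lintegral_const_mul _ (Finset.measurable_sum _ fun y _ => him' y),
    lintegral_const_mul _ (Finset.measurable_sum _ fun y _ => hfm y),
    lintegral_finsetSum _ fun y _ => him' y, lintegral_finsetSum _ fun y _ => hfm y] at hint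
  have e1 : ∀ y, ∫⁻ ω, E.indicator (fun _ => (1 : ℝ≥0∞)) (τ y ω) ∂P = P E := fun y => by
    rw [(hτmp y).lintegral_comp him, lintegral_indicator hEm]; simp
  have e2 : ∀ y, ∫⁻ ω, f (τ y ω) ∂P = ∫⁻ ω, f ω ∂P := fun y => (hτmp y).lintegral_comp hf
  simp only [e1, e2, Finset.sum_const, card_zball, nsmul_eq_mul] at hint
  have hc0 : (((2 * N0 + 1) ^ d : ℕ) : ℝ≥0∞) ≠ 0 := by positivity
  have hct : (((2 * N0 + 1) ^ d : ℕ) : ℝ≥0∞) ≠ ⊤ := ENNReal.natCast_ne_top _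
  have hle : (((2 * (N0 + N0) + 1) ^ d : ℕ) : ℝ≥0∞) ≤ 2 ^ d * (((2 * N0 + 1) ^ d : ℕ) : ℝ≥0∞) := by
    have : (2 * (N0 + N0) + 1) ^ d ≤ 2 ^ d * (2 * N0 + 1) ^ d := by
      rw [← mul_pow]; exact Nat.pow_le_pow_left (by omega) d
    exact_mod_cast this
  have : (((2 * N0 + 1) ^ d : ℕ) : ℝ≥0∞) * (t * P E) ≤
      (((2 * N0 + 1) ^ d : ℕ) : ℝ≥0∞) * (10 ^ d * ∫⁻ ω, f ω ∂P) := by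
    calc _ = t * ((((2 * N0 + 1) ^ d : ℕ) : ℝ≥0∞) * P E) := by ring
      _ ≤ _ := hint
      _ ≤ 5 ^ d * ((2 ^ d * (((2 * N0 + 1) ^ d : ℕ) : ℝ≥0∞)) * ∫⁻ ω, f ω ∂P) := by gcongr
      _ = _ := by
        rw [show (10 : ℝ≥0∞) = 5 * 2 by norm_num, mul_pow]; ring
  exact (ENNReal.mul_le_mul_iff_right hc0 hct).1 this

/-- The maximal function. -/
def maxFn (τ : Zd d → Ω → Ω) (f : Ω → ℝ≥0∞) (ω : Ω) : ℝ≥0∞ :=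
  ⨆ N : ℕ, (∑ y ∈ zball 0 N, f (τ y ω)) / (2 * N + 1 : ℕ) ^ d

lemma measurable_maxFn (τ : Zd d → Ω → Ω) (hτ : ∀ z, Measurable (τ z)) (f : Ω → ℝ≥0∞)
    (hf : Measurable f) : Measurable (maxFn τ f) := by
  refine Measurable.iSup fun N => ?_
  exact (Finset.measurable_sum _ fun y _ => hf.comp (hτ y)).div_const _

lemma maximal_ineq (P : Measure Ω) (τ : Zd d → Ω → Ω)
    (hτadd : ∀ x y : Zd d, τ (x + y) = τ x ∘ τ y)
    (hτmp : ∀ z : Zd d, MeasurePreserving (τ z) P P)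
    (f : Ω → ℝ≥0∞) (hf : Measurable f) (t : ℝ≥0∞) :
    t * P {ω | t < maxFn τ f ω} ≤ 10 ^ d * ∫⁻ ω, f ω ∂P := by
  have h1 : {ω | t < maxFn τ f ω} = ⋃ N0, excSet τ f t N0 := by
    ext ω
    simp only [maxFn, excSet, lt_iSup_iff, mem_ofPred_eq, mem_iUnion]
    have e : ∀ N : ℕ, t < (∑ y ∈ zball 0 N, f (τ y ω)) / (2 * N + 1 : ℕ) ^ d ↔
        t * (2 * N + 1 : ℕ) ^ d < ∑ y ∈ zball 0 N, f (τ y ω) := fun N =>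
      ENNReal.lt_div_iff_mul_lt (Or.inl (by positivity))
        (Or.inl (ENNReal.pow_ne_top (ENNReal.natCast_ne_top _)))
    constructor
    · rintro ⟨N, hN⟩
      exact ⟨N, N, le_rfl, (e N).1 hN⟩
    · rintro ⟨_, N, _, hN⟩
      exact ⟨N, (e N).2 hN⟩
  have hmono : Monotone (excSet τ f t) := by
    rintro a b hab ω ⟨N, h1, h2⟩
    exact ⟨N, h1.trans hab, h2⟩
  rw [h1, hmono.measure_iUnion, ENNReal.mul_iSup]
  exact iSup_le fun N0 => maximal_trunc P τ hτadd hτmp f hf t N0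

/-- Truncation from below. -/
def trunc (g : Ω → ℝ≥0∞) (M : ℕ) (ω : Ω) : ℝ≥0∞ := if (M : ℝ≥0∞) < g ω then g ω else 0

lemma measurable_trunc (g : Ω → ℝ≥0∞) (hg : Measurable g) (M : ℕ) : Measurable (trunc g M) :=
  Measurable.ite (measurableSet_lt measurable_const hg) hg measurable_const

lemma tendsto_trunc (P : Measure Ω) (g : Ω → ℝ≥0∞) (hg : Measurable g)
    (hgi : ∫⁻ ω, g ω ∂P < ⊤) : Tendsto (fun M => ∫⁻ ω, trunc g M ω ∂P) atTop (𝓝 0) := by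
  have := tendsto_lintegral_of_dominated_convergence (μ := P) (F := fun M => trunc g M)
    (f := fun _ => 0) g (measurable_trunc g hg)
    (fun M => Eventually.of_forall fun ω => by
      simp only [trunc]; split_ifs
      · exact le_rfl
      · exact zero_le) hgi.ne (by
      filter_upwards [ae_lt_top hg hgi.ne] with ω hω
      obtain ⟨M0, hM0⟩ := ENNReal.exists_nat_gt hω.ne
      refine tendsto_const_nhds.congr' ?_
      filter_upwards [eventually_ge_atTop M0] with M hM
      simp only [trunc]
      rw [if_neg]
      rw [not_lt]
      exact hM0.le.trans (by exact_mod_cast hM))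
  simpa using this

lemma ae_maxFn (P : Measure Ω) (τ : Zd d → Ω → Ω)
    (hτadd : ∀ x y : Zd d, τ (x + y) = τ x ∘ τ y)
    (hτmp : ∀ z : Zd d, MeasurePreserving (τ z) P P)
    (g : Ω → ℝ≥0∞) (hg : Measurable g) (hgi : ∫⁻ ω, g ω ∂P < ⊤) :
    ∀ᵐ ω ∂P, ⨅ M, maxFn τ (trunc g M) ω = 0 := by
  have h : ∀ m : ℕ, ∀ᵐ ω ∂P, ⨅ M, maxFn τ (trunc g M) ω ≤ ((m : ℝ≥0∞) + 1)⁻¹ := by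
    intro m
    set t : ℝ≥0∞ := ((m : ℝ≥0∞) + 1)⁻¹ with ht
    have ht0 : t ≠ 0 := by simp [ht]
    have htt : t ≠ ⊤ := by simp [ht]
    rw [ae_iff]
    have hb : ∀ M, t * P {ω | ¬ ⨅ M, maxFn τ (trunc g M) ω ≤ t} ≤
        10 ^ d * ∫⁻ ω, trunc g M ω ∂P := by
      intro M
      refine le_trans ?_ (maximal_ineq P τ hτadd hτmp (trunc g M) (measurable_trunc g hg M) t)
      gcongr
      intro hω
      rw [not_le] at hω
      exact hω.trans_le (iInf_le _ M)
    have hlim : Tendsto (fun M => (10 : ℝ≥0∞) ^ d * ∫⁻ ω, trunc g M ω ∂P) atTop (𝓝 (10 ^ d * 0)) :=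
      ENNReal.Tendsto.const_mul (tendsto_trunc P g hg hgi)
        (Or.inr (ENNReal.pow_ne_top (by norm_num)))
    rw [mul_zero] at hlim
    have := ge_of_tendsto' hlim hb
    have := le_antisymm this zero_le
    exact (mul_eq_zero.1 this).resolve_left ht0
  filter_upwards [ae_all_iff.2 h] with ω hω
  refine le_antisymm ?_ zero_le
  have hl : Tendsto (fun m : ℕ => ((m : ℝ≥0∞) + 1)⁻¹) atTop (𝓝 0) := by
    have := (tendsto_add_atTop_iff_nat 1).2 ENNReal.tendsto_inv_nat_nhds_zero
    simpa using this
  exact ge_of_tendsto' hl hω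

lemma maxFn_bound (τ : Zd d → Ω → Ω) (f : Ω → ℝ≥0∞) (ω : Ω) (θ : ℝ) (hθ : 0 < θ)
    (h : maxFn τ f ω < ENNReal.ofReal θ) :
    (∀ z, f (τ z ω) ≠ ⊤) ∧
      ∀ N : ℕ, ∑ y ∈ zball 0 N, (f (τ y ω)).toReal ≤ θ * (2 * (N : ℝ) + 1) ^ d := by
  have hN : ∀ N : ℕ, ∑ y ∈ zball 0 N, f (τ y ω) ≤ ENNReal.ofReal θ * (2 * N + 1 : ℕ) ^ d := by
    intro N
    have h1 : (∑ y ∈ zball 0 N, f (τ y ω)) / (2 * N + 1 : ℕ) ^ d ≤ ENNReal.ofReal θ :=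
      (le_iSup (fun N : ℕ => (∑ y ∈ zball 0 N, f (τ y ω)) / (2 * N + 1 : ℕ) ^ d) N).trans h.le
    exact (ENNReal.div_le_iff_le_mul (Or.inl (by positivity))
        (Or.inl (ENNReal.pow_ne_top (ENNReal.natCast_ne_top _)))).1 h1
  have htop : ∀ N : ℕ, ENNReal.ofReal θ * (2 * N + 1 : ℕ) ^ d ≠ ⊤ := fun N =>
    ENNReal.mul_ne_top ENNReal.ofReal_ne_top (ENNReal.pow_ne_top (ENNReal.natCast_ne_top _))
  have hfin : ∀ z, f (τ z ω) ≠ ⊤ := by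
    intro z
    have hz : z ∈ zball (0 : Zd d) (∑ i, (z i).natAbs) := by
      rw [mem_zball]
      intro i
      have := Finset.single_le_sum (f := fun i => (z i).natAbs) (fun _ _ => Nat.zero_le _)
        (Finset.mem_univ i)
      simp only [Pi.zero_apply] at *
      omega
    have h2 := (Finset.single_le_sum (f := fun y => f (τ y ω)) (fun _ _ => zero_le) hz).trans (hN _)
    exact ne_top_of_le_ne_top (htop _) h2
  refine ⟨hfin, fun N => ?_⟩
  rw [← ENNReal.toReal_sum fun y _ => hfin y]
  refine (ENNReal.toReal_mono (htop N) (hN N)).trans (le_of_eq ?_)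
  rw [ENNReal.toReal_mul, ENNReal.toReal_ofReal hθ.le, ENNReal.toReal_pow, ENNReal.toReal_natCast]
  push_cast
  rfl

lemma pointwise_bound (p c₁ β η l r k v h M : ℝ) (hp : 1 < p) (hc₁ : 0 < c₁)
    (hβ : β = 1 / (p - 1)) (hη : 0 < η) (hl : 0 < l) (hk1 : 0 < k)
    (hk : 2 * c₁ ^ 2 ≤ k ^ p) (hv0 : 0 ≤ v) (hv : l * (r ^ p / c₁ - c₁) ≤ v) (hh0 : 0 ≤ h)
    (hh : M < l ^ (-β) → h = l ^ (-β)) (hM : M ≤ k * η ^ β) :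
    (if k ≤ r then r else 0) ≤ 2 * c₁ * η * v + η ^ (-β) * h := by
  have hηβ : 0 < η ^ (-β) := Real.rpow_pos_of_pos hη _
  have hβ0 : 0 < β := by rw [hβ]; exact one_div_pos.2 (by linarith)
  split_ifs with hkr
  swap
  · positivity
  have hr : 0 < r := hk1.trans_le hkr
  have hrp : 2 * c₁ ^ 2 ≤ r ^ p := hk.trans (Real.rpow_le_rpow hk1.le hkr (by linarith))
  have h1 : l * r ^ p ≤ 2 * c₁ * v := by
    have e : l * (r ^ p / c₁ - c₁) * (2 * c₁) = l * (2 * r ^ p - 2 * c₁ ^ 2) := by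
      field_simp
    have : l * (r ^ p / c₁ - c₁) * (2 * c₁) ≤ v * (2 * c₁) :=
      mul_le_mul_of_nonneg_right hv (by positivity)
    rw [e] at this
    nlinarith
  by_cases hc : r ≤ η * (l * r ^ p)
  · have : η * (l * r ^ p) ≤ η * (2 * c₁ * v) := by gcongr
    have : 0 ≤ η ^ (-β) * h := by positivity
    linarith
  · push Not at hc
    have e : r ^ p = r * r ^ (p - 1) := by
      rw [Real.rpow_sub_one hr.ne']; field_simp
    rw [e] at hc
    have h2 : r ^ (p - 1) < (η * l)⁻¹ := by
      rw [lt_inv_comm₀ (by positivity) (by positivity)]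
      rw [lt_inv_comm₀ (by positivity) (by positivity)]
      rw [← one_div, lt_div_iff₀ (by positivity)]
      have : r * (r ^ (p - 1) * (η * l)) < r * 1 := by linarith
      exact lt_of_mul_lt_mul_left this hr.le
    have h3 : r < (η * l) ^ (-β) := by
      have := Real.rpow_lt_rpow (by positivity) h2 hβ0
      rw [← Real.rpow_mul hr.le, hβ, mul_one_div_cancel (by linarith : p - 1 ≠ 0), Real.rpow_one,
        ← hβ, Real.inv_rpow (by positivity), ← Real.rpow_neg (by positivity)] at this
      exact this
    rw [Real.mul_rpow hη.le hl.le] at h3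
    have h4 : M < l ^ (-β) := by
      have hη' : 0 < η ^ β := Real.rpow_pos_of_pos hη _
      have : r * η ^ β < η ^ (-β) * l ^ (-β) * η ^ β := by gcongr
      have e2 : η ^ (-β) * l ^ (-β) * η ^ β = l ^ (-β) := by
        rw [Real.rpow_neg hη.le]; field_simp
      rw [e2] at this
      have : k * η ^ β ≤ r * η ^ β := by gcongr
      linarith
    rw [hh h4]
    have : 0 ≤ 2 * c₁ * η * v := by positivity
    linarith

lemma stdb_injective : Function.Injective (stdb : Fin d → Zd d) := by
  intro i j hij
  have := congrFun hij i
  by_contra hne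
  simp [stdb, hne] at this

lemma norm_toRd_stdb (i : Fin d) : ‖toRd (stdb i : Zd d)‖ = 1 := by
  have : toRd (stdb i : Zd d) = EuclideanSpace.single i (1 : ℝ) := by
    ext j
    simp [toRd, stdb, Pi.single_apply]
  rw [this]; simp

lemma mem_zball_of_mem_halfBox (a b : Fin d → ℝ) (R : ℝ) (ha : ∀ i, |a i| ≤ R)
    (hb : ∀ i, |b i| ≤ R) (ε : ℝ) (hε : 0 < ε) (z : Zd d) (hz : ε • toRd z ∈ halfBox a b) :
    z ∈ zball (0 : Zd d) ⌈R / ε⌉₊ := by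
  rw [mem_zball]
  intro i
  have h := hz i
  have e : (ε • toRd z) i = ε * (z i : ℝ) := by simp [toRd]
  rw [e] at h
  have h1 := abs_le.1 (ha i)
  have h2 := abs_le.1 (hb i)
  have hN := Nat.le_ceil (R / ε)
  have h3 : (z i : ℝ) ≤ R / ε := by rw [le_div_iff₀ hε]; linarith
  have h4 : -(R / ε) ≤ (z i : ℝ) := by rw [neg_le, le_div_iff₀ hε]; linarith
  have h5 : (z i : ℝ) ≤ ((⌈R / ε⌉₊ : ℤ) : ℝ) := by push_cast; linarith
  have h6 : ((-(⌈R / ε⌉₊ : ℤ) : ℤ) : ℝ) ≤ (z i : ℝ) := by push_cast; linarith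
  simp only [Pi.zero_apply]
  have h5' := Int.cast_le.1 h5
  have h6' := Int.cast_le.1 h6
  omega

/-- discrete equi-integrability of gradients in the critical case
`β = 1/(p-1)`, Step 2 of the proof of Lemma 3.6. The double limit
`lim_k limsup_ε (...) = 0` of the nonnegative truncated sums is phrased in the robust form
"for every `δ > 0` there is `K` such that for all `k ≥ K` eventually the sum is `< δ`". -/
theorem equi_integrability
    {d n : ℕ} (hd : 2 ≤ d) (hn : 1 ≤ n)
    {Ω : Type*} [MeasurableSpace Ω] (P : Measure Ω) [IsProbabilityMeasure P]
    (τ : Zd d → Ω → Ω) (hτ0 : τ 0 = id)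
    (hτadd : ∀ x y : Zd d, τ (x + y) = τ x ∘ τ y)
    (hτmp : ∀ z : Zd d, MeasurePreserving (τ z) P P)
    (hτerg : ∀ B : Set Ω, MeasurableSet B → (∀ z : Zd d, τ z ⁻¹' B = B) → P B = 0 ∨ P B = 1)
    (E0 : Finset (Zd d)) (hE00 : (0 : Zd d) ∉ E0) (hE0b : ∀ i : Fin d, stdb i ∈ E0)
    (p c₁ : ℝ) (hp : 1 < p) (hc₁ : 0 < c₁)
    (V : Zd d → Ω → Rn n → ℝ)
    (hVmeas : ∀ b ∈ E0, Measurable fun q : Ω × Rn n => V b q.1 q.2)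
    (hVcont : ∀ b ∈ E0, ∀ ω : Ω, Continuous (V b ω))
    (hVnn : ∀ b ∈ E0, ∀ (ω : Ω) (r : Rn n), 0 ≤ V b ω r)
    (lam : Zd d → Ω → ℝ)
    (hlammeas : ∀ b ∈ E0, Measurable (lam b))
    (hlamnn : ∀ b ∈ E0, ∀ ω : Ω, 0 ≤ lam b ω)
    (hgrowth : ∀ b ∈ E0, ∀ (ω : Ω) (r : Rn n),
      lam b ω * (‖r‖ ^ p / c₁ - c₁) ≤ V b ω r ∧ V b ω r ≤ c₁ * (1 + lam b ω * (‖r‖ ^ p + 1)))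
    (α β : ℝ) (hα : 1 ≤ α) (hβ : 1 / (p - 1) ≤ β)
    (hmomα : ∀ b ∈ E0, ∫⁻ ω, ENNReal.ofReal (lam b ω ^ α) ∂P < ⊤)
    (hmomβ : ∀ i : Fin d, ∫⁻ ω, ENNReal.ofReal (lam (stdb i) ω) ^ (-β) ∂P < ⊤)
    (hβcrit : β = 1 / (p - 1)) :
    ∃ Ω₀ : Set Ω, MeasurableSet Ω₀ ∧ P Ω₀ = 1 ∧
      ∀ ω ∈ Ω₀, ∀ a b : Fin d → ℝ, ∀ uε : ℝ → Zd d → Rn n,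
        IsBoundedUnder (· ≤ ·) (𝓝[>] (0 : ℝ))
          (fun ε => energyE τ E0 V ε ω (uε ε) (halfBox a b)) →
        ∀ δ : ℝ, 0 < δ → ∃ K : ℕ, ∀ k : ℕ, K ≤ k →
          ∀ᶠ ε in 𝓝[>] (0 : ℝ),
            ε ^ d * ∑' z : Zd d,
              (if ε • toRd z ∈ halfBox a b then
                ∑ i : Fin d,
                  (if (k : ℝ) ≤ ‖(ε * ‖toRd (stdb i)‖)⁻¹ • (uε ε (z + stdb i) - uε ε z)‖ then
                    ‖(ε * ‖toRd (stdb i)‖)⁻¹ • (uε ε (z + stdb i) - uε ε z)‖ else 0)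
              else 0) < δ := by
  set g : Fin d → Ω → ℝ≥0∞ := fun i ω => ENNReal.ofReal (lam (stdb i) ω) ^ (-β) with hg
  have hgm : ∀ i, Measurable (g i) := fun i =>
    (ENNReal.measurable_ofReal.comp (hlammeas _ (hE0b i))).pow_const _
  have hβ0 : 0 < β := by rw [hβcrit]; exact one_div_pos.2 (by linarith)
  refine ⟨{ω | ∀ i, ⨅ M, maxFn τ (trunc (g i) M) ω = 0}, ?_, ?_, ?_⟩
  · have : {ω | ∀ i, ⨅ M, maxFn τ (trunc (g i) M) ω = 0} =
        ⋂ i, {ω | ⨅ M, maxFn τ (trunc (g i) M) ω = 0} := by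
      ext ω; simp
    rw [this]
    refine MeasurableSet.iInter fun i => ?_
    exact measurableSet_eq_fun (Measurable.iInf fun M => measurable_maxFn τ
      (fun z => (hτmp z).measurable) _ (measurable_trunc _ (hgm i) M)) measurable_const
  · have := ae_all_iff.2 fun i => ae_maxFn P τ hτadd hτmp (g i) (hgm i) (hmomβ i)
    exact (measure_congr (eventuallyEq_univ.2 this)).trans measure_univ
  · intro ω hω a b uε hbdd δ hδ
    replace hω : ∀ i, ⨅ M, maxFn τ (trunc (g i) M) ω = 0 := hω
    obtain ⟨C, hC⟩ := hbdd
    rw [eventually_map] at hC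
    -- the size of the box
    set R : ℝ := ∑ i, |a i| + ∑ i, |b i| with hR
    have hR0 : 0 ≤ R := by positivity
    have ha : ∀ i, |a i| ≤ R := fun i => by
      have := Finset.single_le_sum (f := fun i => |a i|) (fun _ _ => abs_nonneg _)
        (Finset.mem_univ i)
      have : 0 ≤ ∑ i, |b i| := by positivity
      simp only [hR] at *; linarith
    have hb : ∀ i, |b i| ≤ R := fun i => by
      have := Finset.single_le_sum (f := fun i => |b i|) (fun _ _ => abs_nonneg _)
        (Finset.mem_univ i)
      have : 0 ≤ ∑ i, |a i| := by positivity
      simp only [hR] at *; linarith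
    set η : ℝ := δ / (8 * c₁ * (|C| + 1)) with hη
    have hη0 : 0 < η := by positivity
    have hηβ : 0 < η ^ (-β) := Real.rpow_pos_of_pos hη0 _
    set θ : ℝ := δ / (4 * η ^ (-β) * ((d : ℝ) + 1) * (2 * R + 3) ^ d) with hθ
    have hθ0 : 0 < θ := by positivity
    have hM : ∀ i, ∃ M : ℕ, maxFn τ (trunc (g i) M) ω < ENNReal.ofReal θ := by
      intro i
      rw [← iInf_lt_iff, hω i]
      exact ENNReal.ofReal_pos.2 hθ0
    choose M hM using hM
    have hMb := fun i => maxFn_bound τ _ ω θ hθ0 (hM i)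
    -- choice of K
    have ev1 : ∀ᶠ k : ℕ in atTop, 2 * c₁ ^ 2 ≤ (k : ℝ) ^ p :=
      ((tendsto_rpow_atTop (by linarith : 0 < p)).comp
        tendsto_natCast_atTop_atTop).eventually_ge_atTop _
    have ev2 : ∀ i, ∀ᶠ k : ℕ in atTop, (M i : ℝ) ≤ (k : ℝ) * η ^ β := fun i =>
      ((tendsto_natCast_atTop_atTop (R := ℝ)).atTop_mul_const
        (Real.rpow_pos_of_pos hη0 β)).eventually_ge_atTop _
    obtain ⟨K, hK⟩ := eventually_atTop.1
      (ev1.and ((eventually_all.2 ev2).and (eventually_gt_atTop 0)))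
    refine ⟨K, fun k hk => ?_⟩
    obtain ⟨hk1, hk2, hk3⟩ := hK k hk
    filter_upwards [hC, self_mem_nhdsWithin,
      mem_nhdsWithin_of_mem_nhds (Iio_mem_nhds (zero_lt_one' ℝ))] with ε hεC hε hε1
    replace hε : 0 < ε := hε
    replace hε1 : ε < 1 := hε1
    set N : ℕ := ⌈R / ε⌉₊ with hN
    have hbox : ∀ z : Zd d, z ∉ zball (0 : Zd d) N → ¬ (ε • toRd z ∈ halfBox a b) :=
      fun z hz hz' => hz (mem_zball_of_mem_halfBox a b R ha hb ε hε z hz')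
    unfold energyE at hεC
    rw [tsum_eq_sum (s := zball (0 : Zd d) N) (fun z hz => if_neg (hbox z hz))] at hεC ⊢
    set h : Fin d → Zd d → ℝ := fun i z => (trunc (g i) (M i) (τ z ω)).toReal with hh
    set W : Zd d → ℝ := fun z => if ε • toRd z ∈ halfBox a b then
      ∑ b ∈ E0, V b (τ z ω) ((ε * ‖toRd b‖)⁻¹ • (uε ε (z + b) - uε ε z)) else 0 with hW
    have hterm : ∀ z : Zd d, (if ε • toRd z ∈ halfBox a b then
                ∑ i : Fin d,
                  (if (k : ℝ) ≤ ‖(ε * ‖toRd (stdb i)‖)⁻¹ • (uε ε (z + stdb i) - uε ε z)‖ then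
                    ‖(ε * ‖toRd (stdb i)‖)⁻¹ • (uε ε (z + stdb i) - uε ε z)‖ else 0)
              else 0) ≤ 2 * c₁ * η * W z + η ^ (-β) * ∑ i, h i z := by
      intro z
      have hh0 : ∀ i, 0 ≤ h i z := fun i => ENNReal.toReal_nonneg
      simp only [hW]
      split_ifs with hz
      swap
      · have : 0 ≤ ∑ i, h i z := Finset.sum_nonneg fun i _ => hh0 i
        have : 0 ≤ η ^ (-β) * ∑ i, h i z := by positivity
        linarith
      have hsub : ∑ i : Fin d, V (stdb i) (τ z ω)
            ((ε * ‖toRd (stdb i)‖)⁻¹ • (uε ε (z + stdb i) - uε ε z)) ≤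
          ∑ b ∈ E0, V b (τ z ω) ((ε * ‖toRd b‖)⁻¹ • (uε ε (z + b) - uε ε z)) := by
        rw [← Finset.sum_image (s := Finset.univ) (g := (stdb : Fin d → Zd d))
          (f := fun b => V b (τ z ω) ((ε * ‖toRd b‖)⁻¹ • (uε ε (z + b) - uε ε z)))
          (fun i _ j _ hij => stdb_injective hij)]
        refine Finset.sum_le_sum_of_subset_of_nonneg ?_ (fun b hb _ => hVnn b hb _ _)
        intro b hb
        obtain ⟨i, _, rfl⟩ := Finset.mem_image.1 hb
        exact hE0b i
      refine le_trans ?_ (add_le_add_left (mul_le_mul_of_nonneg_left hsub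
        (by positivity : 0 ≤ 2 * c₁ * η)) _)
      rw [Finset.mul_sum, Finset.mul_sum, ← Finset.sum_add_distrib]
      refine Finset.sum_le_sum fun i _ => ?_
      have hfin := (hMb i).1 z
      have hlpos : 0 < lam (stdb i) (τ z ω) := by
        rcases (hlamnn _ (hE0b i) (τ z ω)).lt_or_eq with h0 | h0
        · exact h0
        · exfalso
          apply hfin
          have : g i (τ z ω) = ⊤ := by
            simp only [hg, ← h0, ENNReal.ofReal_zero]
            exact ENNReal.zero_rpow_of_neg (by linarith)
          simp [trunc, this]
      have hgl : g i (τ z ω) = ENNReal.ofReal (lam (stdb i) (τ z ω) ^ (-β)) := by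
        simp only [hg]
        rw [ENNReal.ofReal_rpow_of_pos hlpos]
      refine pointwise_bound p c₁ β η (lam (stdb i) (τ z ω)) _ k _ _ (M i) hp hc₁ hβcrit hη0 hlpos
        (by exact_mod_cast hk3) hk1 (hVnn _ (hE0b i) _ _) (hgrowth _ (hE0b i) _ _).1 (hh0 i) ?_
        (hk2 i)
      intro hlt
      have hlt' : (M i : ℝ≥0∞) < g i (τ z ω) := by
        rw [hgl, ← ENNReal.ofReal_natCast]
        exact (ENNReal.ofReal_lt_ofReal_iff (Real.rpow_pos_of_pos hlpos _)).2 hlt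
      simp only [hh, trunc, if_pos hlt']
      rw [hgl, ENNReal.toReal_ofReal (Real.rpow_nonneg hlpos.le _)]
    have hsum := Finset.sum_le_sum (s := zball (0 : Zd d) N) fun z _ => hterm z
    rw [Finset.sum_add_distrib, ← Finset.mul_sum, ← Finset.mul_sum, Finset.sum_comm] at hsum
    have hhs : ∑ i, ∑ z ∈ zball (0 : Zd d) N, h i z ≤ (d : ℝ) * (θ * (2 * (N : ℝ) + 1) ^ d) := by
      refine (Finset.sum_le_sum fun i _ => (hMb i).2 N).trans (le_of_eq ?_)
      simp
    have hεd : 0 < ε ^ d := by positivity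
    have hNε : ε * (2 * (N : ℝ) + 1) ≤ 2 * R + 3 := by
      have h1 : (N : ℝ) < R / ε + 1 := Nat.ceil_lt_add_one (by positivity)
      have h2 : ε * (2 * (N : ℝ) + 1) ≤ ε * (2 * (R / ε + 1) + 1) := by gcongr
      have h3 : ε * (2 * (R / ε + 1) + 1) = 2 * R + 3 * ε := by field_simp; ring
      linarith
    have hNd : ε ^ d * (2 * (N : ℝ) + 1) ^ d ≤ (2 * R + 3) ^ d := by
      rw [← mul_pow]; exact pow_le_pow_left₀ (by positivity) hNε d
    have hA : 2 * c₁ * η * (ε ^ d * ∑ z ∈ zball (0 : Zd d) N, W z) ≤ δ / 4 := by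
      calc _ ≤ 2 * c₁ * η * (|C| + 1) := by
            have := le_abs_self C
            gcongr
            linarith
        _ = δ / 4 := by rw [hη]; field_simp; norm_num
    have hB : η ^ (-β) * ((d : ℝ) * (θ * (ε ^ d * (2 * (N : ℝ) + 1) ^ d))) ≤ δ / 4 := by
      calc _ ≤ η ^ (-β) * (((d : ℝ) + 1) * (θ * (2 * R + 3) ^ d)) := by
            gcongr; linarith
        _ = δ / 4 := by rw [hθ]; field_simp
    calc _ ≤ ε ^ d * (2 * c₁ * η * ∑ z ∈ zball (0 : Zd d) N, W z +
            η ^ (-β) * ∑ i, ∑ z ∈ zball (0 : Zd d) N, h i z) := by gcongr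
      _ ≤ ε ^ d * (2 * c₁ * η * ∑ z ∈ zball (0 : Zd d) N, W z +
            η ^ (-β) * ((d : ℝ) * (θ * (2 * (N : ℝ) + 1) ^ d))) := by gcongr
      _ = 2 * c₁ * η * (ε ^ d * ∑ z ∈ zball (0 : Zd d) N, W z) +
            η ^ (-β) * ((d : ℝ) * (θ * (ε ^ d * (2 * (N : ℝ) + 1) ^ d))) := by ring
      _ ≤ δ / 4 + δ / 4 := add_le_add hA hB
      _ < δ := by linarith

end StochHom
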